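/- Every twincut graph G_k belongs to the class C, where C is the smallest class of graphs containing all graphs on at most two vertices and closed under vertex replication and gluing along independent sets of size at most two. Consequently, C is a hereditary class of triangle-free graphs of unbounded chromatic number. -/

import Mathlib

/-- A structured tree: a rooted tree together with, at each internal node,
a graph on its children. A `leaf` is a tree with a single (leaf) node; a
`node ι c g` has children indexed by `ι`, subtrees `c i`, and the graph `g`
on the children. -/
inductive STree : Type 1 where
  | leaf : STree
  | node : (ι : Type) → (ι → STree) → SimpleGraph ι → STree

namespace STree

/-- The type of nodes of a structured tree. -/
def NodeType : STree → Type
  | leaf => PUnit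
  | node ι c _ => PUnit ⊕ Σ i : ι, NodeType (c i)

/-- The type of branches (root-to-leaf paths) of a structured tree. -/
def Branch : STree → Type
  | leaf => PUnit
  | node _ c _ => Σ i, Branch (c i)

/-- The root of a structured tree, as a node. -/
def root : (t : STree) → t.NodeType
  | leaf => PUnit.unit
  | node _ _ _ => Sum.inl PUnit.unit

/-- `onBranch t b u` means that the node `u` lies on the branch `b`. -/
def onBranch : (t : STree) → t.Branch → t.NodeType → Prop
  | leaf, _, _ => True
  | node _ c _, ⟨i, b⟩, u =>
      match u with
      | Sum.inl _ => True
      | Sum.inr ⟨j, w⟩ => ∃ h : j = i, onBranch (c i) b (h ▸ w)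

/-- Adjacency between tree nodes in the realization: the union of the edges
of the graphs `g(v)` placed on the children of each internal node `v`
(tree edges are *not* included). -/
def treeAdj : (t : STree) → t.NodeType → t.NodeType → Prop
  | leaf, _, _ => False
  | node ι c g, u, v =>
      match u, v with
      | Sum.inr ⟨i, u'⟩, Sum.inr ⟨j, v'⟩ =>
          (∃ h : i = j, treeAdj (c j) (h ▸ u') v') ∨
          (g.Adj i j ∧ u' = root (c i) ∧ v' = root (c j))
      | _, _ => False

/-- The realization `R(T,g)` of a structured tree: its vertices are the tree
nodes together with the branches; edges are those of the graphs `g(v)`, plus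
an edge from each branch vertex to every tree node lying on that branch. -/
def realization (t : STree) : SimpleGraph (t.NodeType ⊕ t.Branch) :=
  SimpleGraph.fromRel (fun x y =>
    match x, y with
    | Sum.inl u, Sum.inl v => treeAdj t u v
    | Sum.inl u, Sum.inr b => onBranch t b u
    | Sum.inr b, Sum.inl u => onBranch t b u
    | Sum.inr _, Sum.inr _ => False)

/-- The level of a node (the root is at level 1). -/
def level : (t : STree) → t.NodeType → ℕ
  | leaf, _ => 1
  | node _ c _, u =>
      match u with
      | Sum.inl _ => 1
      | Sum.inr ⟨i, w⟩ => level (c i) w + 1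

/-- `IsInternalGraphOf t ⟨ι, g⟩` means that `g` is the graph attached to some
internal node of `t` (on its children, indexed by `ι`). -/
inductive IsInternalGraphOf : STree → (Σ ι : Type, SimpleGraph ι) → Prop where
  | here : ∀ (ι : Type) (c : ι → STree) (g : SimpleGraph ι),
      IsInternalGraphOf (node ι c g) ⟨ι, g⟩
  | child : ∀ (ι : Type) (c : ι → STree) (g : SimpleGraph ι) (i : ι) (p),
      IsInternalGraphOf (c i) p → IsInternalGraphOf (node ι c g) p

end STree

/-- Builds the structured tree in which all nodes at level `i` carry the
`i`-th graph of the list on their children (so the tree has `L.length + 1`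
levels). -/
def buildTree : List (Σ V : Type, SimpleGraph V) → STree
  | [] => .leaf
  | ⟨ι, g⟩ :: rest => .node ι (fun _ => buildTree rest) g

/-- The realization of a structured tree, packaged with its vertex type. -/
def realizationSigma (t : STree) : Σ V : Type, SimpleGraph V :=
  ⟨t.NodeType ⊕ t.Branch, t.realization⟩

/-- `twincutList m` is the list `[G₂, G₃, …, G_{m+1}]` of twincut graphs. -/
def twincutList : ℕ → List (Σ V : Type, SimpleGraph V)
  | 0 => []
  | m + 1 => twincutList m ++ [realizationSigma (buildTree (twincutList m))]

/-- The structured tree `T_{m+2}` whose realization is the twincut graph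
`G_{m+2}`: it has `m + 1` levels, and every node at level `i ≤ m` carries
the graph `G_{i+1}` on its children. -/
def twincutTree (m : ℕ) : STree := buildTree (twincutList m)

/-- The twincut graphs: `G 1` is the one-vertex graph, and for `k ≥ 2`,
`G k` is the realization of the structured tree `T_k`. -/
def twincutG : ℕ → Σ V : Type, SimpleGraph V
  | 0 => ⟨PUnit, ⊥⟩
  | 1 => ⟨PUnit, ⊥⟩
  | (m + 2) => realizationSigma (twincutTree m)

/-- Vertex replication: add a new vertex (a non-adjacent twin of `v`) with the
same neighborhood as `v`, non-adjacent to `v`. Equivalently, substitute `v`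
by an independent set of size two. -/
def replicateGraph {V : Type} (G : SimpleGraph V) (v : V) : SimpleGraph (V ⊕ Unit) :=
  SimpleGraph.fromRel (fun x y =>
    match x, y with
    | Sum.inl a, Sum.inl b => G.Adj a b
    | Sum.inl a, Sum.inr _ => G.Adj a v
    | Sum.inr _, Sum.inl b => G.Adj v b
    | Sum.inr _, Sum.inr _ => False)

/-- Gluing the graphs `G` and `H` along the set `S`, embedded in `G` via `f`
and in `H` via `h`: the two copies of `S` are identified. -/
def glueGraphs {V W S : Type} (G : SimpleGraph V) (H : SimpleGraph W)
    (f : S → V) (h : S → W) : SimpleGraph (V ⊕ {w : W // w ∉ Set.range h}) :=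
  SimpleGraph.fromRel (fun x y =>
    match x, y with
    | Sum.inl a, Sum.inl b => G.Adj a b
    | Sum.inl a, Sum.inr w => ∃ s, f s = a ∧ H.Adj (h s) w.val
    | Sum.inr w, Sum.inl a => ∃ s, f s = a ∧ H.Adj (h s) w.val
    | Sum.inr w, Sum.inr w' => H.Adj w.val w'.val)

/-- The class `𝒞`: the smallest class of graphs (closed under isomorphism)
containing all graphs on at most two vertices, closed under vertex
replication (adding a non-adjacent twin) and under gluing two of its members
along an independent set of size at most two. -/
inductive InC : ∀ V : Type, SimpleGraph V → Prop where
  | small (V : Type) (G : SimpleGraph V) : Finite V → Nat.card V ≤ 2 → InC V G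
  | iso (V W : Type) (G : SimpleGraph V) (H : SimpleGraph W) :
      InC V G → Nonempty (G ≃g H) → InC W H
  | replicate (V : Type) (G : SimpleGraph V) (v : V) :
      InC V G → InC (V ⊕ Unit) (replicateGraph G v)
  | glue (V W S : Type) (G : SimpleGraph V) (H : SimpleGraph W) (f : S → V) (h : S → W) :
      InC V G → InC W H → Function.Injective f → Function.Injective h →
      Finite S → Nat.card S ≤ 2 →
      (∀ s s' : S, ¬ G.Adj (f s) (f s')) → (∀ s s' : S, ¬ H.Adj (h s) (h s')) →
      InC (V ⊕ {w : W // w ∉ Set.range h}) (glueGraphs G H f h)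

/-- `G` has a pair of non-adjacent twins: two distinct non-adjacent vertices
with the same neighborhood. -/
def HasNonadjTwins {V : Type} (G : SimpleGraph V) : Prop :=
  ∃ u v : V, u ≠ v ∧ ¬ G.Adj u v ∧ ∀ w, G.Adj u w ↔ G.Adj v w

/-- `G` has a vertex cutset which is an independent set of size at most two:
a set `S` of at most two pairwise non-adjacent vertices whose removal leaves
a disconnected graph. -/
def HasSmallIndepCutset {V : Type} (G : SimpleGraph V) : Prop :=
  ∃ S : Set V, S.ncard ≤ 2 ∧ (∀ a ∈ S, ∀ b ∈ S, ¬ G.Adj a b) ∧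
    ¬ (G.induce Sᶜ).Connected

/-!
Both closure operations of `𝒞` are recognised inside an ambient graph `K`: adding a twin `u` of a
vertex of `A` turns `K.induce A` into `K.induce (insert u A)`, and if `A ∩ B` is independent of size
at most two and there is no edge between `A \ B` and `B \ A`, then `K.induce (A ∪ B)` is a gluing.
In this form heredity is immediate, up to one point: a set that contains a replicated vertex and its
copy is a twin extension of a set that does not.

Let `t` be a structured tree with graph `g` on the children of its root. In the realization of `t`,
the root and its children span `g` and an isolated vertex. The root and the `i`-th subtree span a
twin extension of the realization of that subtree, because the root and the `i`-th child have the
same neighbors there, namely the branches. The realization of `t` is obtained by gluing these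
graphs, one subtree at a time, along the root and the `i`-th child.

For the chromatic number, follow a branch down from the root, choosing at each level a child whose
color is new; it exists because the `i`-th level carries copies of a graph with no `i`-coloring.
The branch then sees as many colors as it has nodes, and the branch vertex needs one more.
-/

open SimpleGraph

section CliqueFree

variable {V X : Type*} {K : SimpleGraph X} {n : ℕ}

theorem cliqueFree_of_hom {G : SimpleGraph V} (f : G →g K) (hK : K.CliqueFree n) :
    G.CliqueFree n := by
  rw [cliqueFree_iff] at hK ⊢
  exact ⟨fun c => hK.false ⟨f.comp c.toHom, (f.comp c.toHom).injective_of_top_hom⟩⟩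

theorem cliqueFreeOn_range {f : V → X} (h : (K.comap f).CliqueFree n) :
    K.CliqueFreeOn (Set.range f) n := by
  have hsplit : K.induce (Set.range f) = (K.comap f).comap (Set.rangeSplitting f) := by
    ext x y
    simp only [comap_adj, Function.Embedding.subtype_apply, Set.apply_rangeSplitting]
  rw [← cliqueFree_induce_iff, hsplit]
  exact cliqueFree_of_hom (Hom.comap _ _) h

theorem cliqueFreeOn_union {A B : Set X} (hA : K.CliqueFreeOn A n) (hB : K.CliqueFreeOn B n)
    (hAB : ∀ a ∈ A \ B, ∀ b ∈ B \ A, ¬ K.Adj a b) : K.CliqueFreeOn (A ∪ B) n := by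
  intro t ht hclique
  by_cases htA : (t : Set X) ⊆ A
  · exact hA htA hclique
  by_cases htB : (t : Set X) ⊆ B
  · exact hB htB hclique
  obtain ⟨b, hbt, hbA⟩ := Set.not_subset.1 htA
  obtain ⟨a, hat, haB⟩ := Set.not_subset.1 htB
  have haA : a ∈ A := (ht hat).resolve_right haB
  have hbB : b ∈ B := (ht hbt).resolve_left hbA
  exact hAB a ⟨haA, haB⟩ b ⟨hbB, hbA⟩ (hclique.isClique hat hbt (ne_of_mem_of_not_mem haA hbA))

end CliqueFree

section Replicate

variable {V : Type} (G : SimpleGraph V) (v : V)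

theorem replicateGraph_eq_comap : replicateGraph G v = G.comap (Sum.elim id fun _ => v) := by
  ext (a | _) (b | _)
  · simpa [replicateGraph, G.adj_comm b] using fun h : G.Adj a b => h.ne
  all_goals simp [replicateGraph, G.adj_comm v]

end Replicate

section Glue

variable {V W S : Type} {G : SimpleGraph V} {H : SimpleGraph W} {f : S → V} {h : S → W}

theorem glueGraphs_adj_inl_inl {a b : V} :
    (glueGraphs G H f h).Adj (Sum.inl a) (Sum.inl b) ↔ G.Adj a b := by
  simpa [glueGraphs, G.adj_comm b] using fun hab : G.Adj a b => hab.ne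

theorem glueGraphs_adj_inl_inr {a : V} {w : {w : W // w ∉ Set.range h}} :
    (glueGraphs G H f h).Adj (Sum.inl a) (Sum.inr w) ↔ ∃ s, f s = a ∧ H.Adj (h s) w := by
  simp [glueGraphs]

theorem glueGraphs_adj_inr_inr {w w' : {w : W // w ∉ Set.range h}} :
    (glueGraphs G H f h).Adj (Sum.inr w) (Sum.inr w') ↔ H.Adj w w' := by
  simpa [glueGraphs, H.adj_comm w', Subtype.ext_iff] using fun hw : H.Adj w w' => hw.ne

theorem glueGraphs_comap_inl : (glueGraphs G H f h).comap Sum.inl = G := by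
  ext a b
  rw [comap_adj, glueGraphs_adj_inl_inl]

open Classical in
/-- The canonical map of the second graph `H` into the gluing: a vertex `h s` of the second copy of
`S` goes to the vertex `f s` of `G` with which it is identified. -/
noncomputable def glueInr (f : S → V) (h : S → W) (w : W) : V ⊕ {w : W // w ∉ Set.range h} :=
  if hw : w ∈ Set.range h then Sum.inl (f hw.choose) else Sum.inr ⟨w, hw⟩

theorem glueInr_apply_of_notMem {w : W} (hw : w ∉ Set.range h) :
    glueInr f h w = Sum.inr ⟨w, hw⟩ :=
  dif_neg hw

theorem glueInr_apply (hh : Function.Injective h) (s : S) : glueInr f h (h s) = Sum.inl (f s) := by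
  have hs : h s ∈ Set.range h := ⟨s, rfl⟩
  rw [glueInr, dif_pos hs, hh hs.choose_spec]

theorem glueInr_injective (hf : Function.Injective f) (hh : Function.Injective h) :
    Function.Injective (glueInr f h) := by
  intro w w' hww'
  by_cases hw : w ∈ Set.range h <;> by_cases hw' : w' ∈ Set.range h
  · obtain ⟨⟨s, rfl⟩, s', rfl⟩ := And.intro hw hw'
    rw [glueInr_apply hh, glueInr_apply hh] at hww'
    rw [hf (Sum.inl_injective hww')]
  · obtain ⟨s, rfl⟩ := hw
    simp [glueInr_apply hh, glueInr_apply_of_notMem hw'] at hww'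
  · obtain ⟨s', rfl⟩ := hw'
    simp [glueInr_apply hh, glueInr_apply_of_notMem hw] at hww'
  · simpa [glueInr_apply_of_notMem hw, glueInr_apply_of_notMem hw'] using hww'

theorem glueGraphs_adj_inl_glueInr (hf : Function.Injective f) {s : S} {w : W}
    (hw : w ∉ Set.range h) :
    (glueGraphs G H f h).Adj (Sum.inl (f s)) (glueInr f h w) ↔ H.Adj (h s) w := by
  rw [glueInr_apply_of_notMem hw, glueGraphs_adj_inl_inr]
  exact ⟨fun ⟨s', hs', hadj⟩ => hf hs' ▸ hadj, fun hadj => ⟨s, rfl, hadj⟩⟩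

theorem glueGraphs_comap_glueInr (hf : Function.Injective f) (hh : Function.Injective h)
    (hG : ∀ s s', ¬ G.Adj (f s) (f s')) (hH : ∀ s s', ¬ H.Adj (h s) (h s')) :
    (glueGraphs G H f h).comap (glueInr f h) = H := by
  ext w w'
  rw [comap_adj]
  by_cases hw : w ∈ Set.range h <;> by_cases hw' : w' ∈ Set.range h
  · obtain ⟨⟨s, rfl⟩, s', rfl⟩ := And.intro hw hw'
    rw [glueInr_apply hh, glueInr_apply hh, glueGraphs_adj_inl_inl]
    exact iff_of_false (hG s s') (hH s s')
  · obtain ⟨s, rfl⟩ := hw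
    rw [glueInr_apply hh, glueGraphs_adj_inl_glueInr hf hw']
  · obtain ⟨s', rfl⟩ := hw'
    rw [adj_comm, glueInr_apply hh, glueGraphs_adj_inl_glueInr hf hw, adj_comm]
  · rw [glueInr_apply_of_notMem hw, glueInr_apply_of_notMem hw', glueGraphs_adj_inr_inr]

theorem range_inl_union_range_glueInr :
    Set.range Sum.inl ∪ Set.range (glueInr f h) = Set.univ := by
  refine Set.eq_univ_of_forall ?_
  rintro (a | w)
  · exact Or.inl ⟨a, rfl⟩
  · exact Or.inr ⟨w, glueInr_apply_of_notMem w.2⟩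

theorem range_inl_inter_range_glueInr_subset (hh : Function.Injective h) :
    Set.range Sum.inl ∩ Set.range (glueInr f h) ⊆ Set.range (Sum.inl ∘ f) := by
  rintro _ ⟨⟨a, rfl⟩, w, hw⟩
  by_cases hwS : w ∈ Set.range h
  · obtain ⟨s, rfl⟩ := hwS
    exact ⟨s, (glueInr_apply hh s).symm.trans hw⟩
  · cases (glueInr_apply_of_notMem hwS).symm.trans hw

theorem glueGraphs_not_adj (hh : Function.Injective h) {x y : V ⊕ {w : W // w ∉ Set.range h}}
    (hx : x ∉ Set.range (glueInr f h)) (hy : y ∉ Set.range Sum.inl) :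
    ¬ (glueGraphs G H f h).Adj x y := by
  rcases x with a | w
  · rcases y with b | w'
    · exact absurd ⟨b, rfl⟩ hy
    · rw [glueGraphs_adj_inl_inr]
      rintro ⟨s, rfl, -⟩
      exact hx ⟨h s, glueInr_apply hh s⟩
  · exact absurd ⟨w, glueInr_apply_of_notMem w.2⟩ hx

end Glue

section InC

variable {V W X : Type} {K : SimpleGraph X}

theorem inC_iff_of_iso {G : SimpleGraph V} {H : SimpleGraph W} (e : G ≃g H) :
    InC V G ↔ InC W H :=
  ⟨fun hG => .iso _ _ _ _ hG ⟨e⟩, fun hH => .iso _ _ _ _ hH ⟨e.symm⟩⟩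

theorem inC_induce_univ_iff : InC Set.univ (K.induce Set.univ) ↔ InC X K :=
  inC_iff_of_iso (induceUnivIso K)

theorem inC_induce_image_iff {p : V → X} {s : Set V} (hp : Set.InjOn p s) :
    InC (p '' s) (K.induce (p '' s)) ↔ InC s ((K.comap p).induce s) :=
  (inC_iff_of_iso ⟨Equiv.Set.imageOfInjOn p s hp, Iff.rfl⟩).symm

theorem inC_induce_range_iff {p : V → X} (hp : Function.Injective p) :
    InC (Set.range p) (K.induce (Set.range p)) ↔ InC V (K.comap p) := by
  rw [← Set.image_univ, inC_induce_image_iff hp.injOn, inC_induce_univ_iff]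

namespace InC

theorem finite {G : SimpleGraph V} (hG : InC V G) : Finite V := by
  induction hG with
  | small _ _ hV _ => exact hV
  | iso _ _ _ _ _ e _ => exact Finite.of_equiv _ e.some.toEquiv
  | replicate => infer_instance
  | glue => infer_instance

theorem union {A B : Set X} (hA : InC A (K.induce A)) (hB : InC B (K.induce B))
    (hcard : (A ∩ B).ncard ≤ 2) (hind : K.IsIndepSet (A ∩ B))
    (hAB : ∀ a ∈ A \ B, ∀ b ∈ B \ A, ¬ K.Adj a b) :
    InC (A ∪ B : Set X) (K.induce (A ∪ B)) := by
  let f : (A ∩ B : Set X) → A := Set.inclusion Set.inter_subset_left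
  let h : (A ∩ B : Set X) → B := Set.inclusion Set.inter_subset_right
  have range_h (w : B) : w ∈ Set.range h ↔ w.1 ∈ A :=
    ⟨fun ⟨s, hs⟩ => hs ▸ s.2.1, fun hw => ⟨⟨w, hw, w.2⟩, rfl⟩⟩
  let p : A ⊕ {w : B // w ∉ Set.range h} → X := Sum.elim (↑) fun w => w.1
  have p_injective : Function.Injective p :=
    Subtype.val_injective.sumElim (Subtype.val_injective.comp Subtype.val_injective)
      fun a w haw => w.2 ((range_h w).2 (haw ▸ a.2))
  have range_p : Set.range p = A ∪ B := by
    ext x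
    by_cases hx : x ∈ A <;> simp [p, range_h, hx]
  have glue_eq : glueGraphs (K.induce A) (K.induce B) f h = K.comap p := by
    have adj_inl_inr (a : A) (w : {w : B // w ∉ Set.range h}) :
        (∃ s, f s = a ∧ (K.induce B).Adj (h s) w) ↔ K.Adj a w.1 := by
      refine ⟨fun ⟨_, hs, hadj⟩ => hs ▸ hadj, fun hadj => ?_⟩
      have haB : a.1 ∈ B := by
        by_contra haB
        exact hAB a ⟨a.2, haB⟩ w.1 ⟨w.1.2, fun hw => w.2 ((range_h _).2 hw)⟩ hadj
      exact ⟨⟨a, a.2, haB⟩, rfl, hadj⟩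
    ext (a | w) (b | w')
    · exact glueGraphs_adj_inl_inl
    · exact glueGraphs_adj_inl_inr.trans (adj_inl_inr a w')
    · rw [adj_comm, adj_comm (K.comap p)]
      exact glueGraphs_adj_inl_inr.trans (adj_inl_inr b w)
    · exact glueGraphs_adj_inr_inr
  have := hA.finite
  have hfin : Finite (A ∩ B : Set X) := Set.Finite.subset (Set.toFinite A) Set.inter_subset_left
  have not_adj (s s' : (A ∩ B : Set X)) : ¬ K.Adj s s' := fun hadj => hind s.2 s'.2 hadj.ne hadj
  rw [← range_p, inC_induce_range_iff p_injective, ← glue_eq]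
  exact glue _ _ _ _ _ _ _ hA hB (Set.inclusion_injective _) (Set.inclusion_injective _)
    hfin hcard not_adj not_adj

theorem insert_twin {A : Set X} {u v : X} (hA : InC A (K.induce A)) (hv : v ∈ A)
    (htwin : ∀ w ∈ A, K.Adj u w ↔ K.Adj v w) :
    InC (insert u A : Set X) (K.induce (insert u A)) := by
  by_cases hu : u ∈ A
  · rwa [Set.insert_eq_of_mem hu]
  let p : A ⊕ Unit → X := Sum.elim (↑) fun _ => u
  have p_injective : Function.Injective p :=
    Subtype.val_injective.sumElim (Function.injective_of_subsingleton _)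
      fun a _ hau => hu (hau ▸ a.2)
  have range_p : Set.range p = insert u A := by
    rw [Set.Sum.elim_range, Subtype.range_coe, Set.range_const, Set.union_singleton]
  have replicate_eq : replicateGraph (K.induce A) ⟨v, hv⟩ = K.comap p := by
    rw [replicateGraph_eq_comap]
    ext (a | _) (b | _)
    · exact Iff.rfl
    · exact (K.adj_comm _ _).trans ((htwin a a.2).symm.trans (K.adj_comm _ _))
    · exact (htwin b b.2).symm
    · simp [p]
  rw [← range_p, inC_induce_range_iff p_injective, ← replicate_eq]
  exact replicate _ _ _ hA

theorem insert_isolated {A : Set X} {u : X} (hA : InC A (K.induce A))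
    (hu : ∀ a ∈ A, ¬ K.Adj u a) : InC (insert u A : Set X) (K.induce (insert u A)) := by
  have hinter : ({u} ∩ A).Subsingleton := Set.subsingleton_singleton.anti Set.inter_subset_left
  refine union (A := {u}) ?_ hA ?_ (hinter.pairwise _) ?_
  · exact small _ _ inferInstance (by simp)
  · exact (Set.ncard_le_one_iff_subsingleton.2 hinter).trans one_le_two
  · rintro _ ⟨rfl, -⟩ a ⟨ha, -⟩
    exact hu a ha

theorem union_biUnion {ι : Type*} {A : Set X} {B : ι → Set X} (hA : InC A (K.induce A))
    (hB : ∀ i, InC (B i) (K.induce (B i))) (hcard : ∀ i, (A ∩ B i).ncard ≤ 2)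
    (hind : ∀ i, K.IsIndepSet (A ∩ B i)) (hdisj : Pairwise fun i j => B i ∩ B j ⊆ A)
    (hadj : ∀ i, ∀ b ∈ B i \ A, ∀ x ∉ B i, ¬ K.Adj x b) (F : Finset ι) :
    InC (A ∪ ⋃ i ∈ F, B i : Set X) (K.induce (A ∪ ⋃ i ∈ F, B i)) := by
  classical
  induction F using Finset.induction_on with
  | empty =>
    have hempty : A ∪ ⋃ i ∈ (∅ : Finset ι), B i = A := by simp
    rwa [hempty]
  | insert i F hi ih =>
    have hinter : (A ∪ ⋃ j ∈ F, B j) ∩ B i = A ∩ B i := by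
      refine subset_antisymm ?_ (Set.inter_subset_inter_left _ Set.subset_union_left)
      rintro x ⟨hx | hx, hxi⟩
      · exact ⟨hx, hxi⟩
      · obtain ⟨j, hj, hxj⟩ := Set.mem_iUnion₂.1 hx
        exact ⟨hdisj (ne_of_mem_of_not_mem hj hi) ⟨hxj, hxi⟩, hxi⟩
    have hunion : A ∪ ⋃ j ∈ insert i F, B j = (A ∪ ⋃ j ∈ F, B j) ∪ B i := by
      rw [Finset.set_biUnion_insert, Set.union_comm (B i), Set.union_assoc]
    rw [hunion]
    refine union ih (hB i) (hinter ▸ hcard i) (hinter ▸ hind i) ?_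
    rintro x ⟨-, hx⟩ b ⟨hb, hbA⟩
    exact hadj i b ⟨hb, fun h => hbA (Or.inl h)⟩ x hx

theorem induce_replicateGraph {G : SimpleGraph V} (v : V)
    (hG : ∀ s : Set V, InC s (G.induce s)) (s : Set (V ⊕ Unit)) :
    InC s ((replicateGraph G v).induce s) := by
  rw [replicateGraph_eq_comap]
  set p : V ⊕ Unit → V := Sum.elim id fun _ => v
  have of_injOn {t : Set (V ⊕ Unit)} (ht : Set.InjOn p t) : InC t ((G.comap p).induce t) :=
    (inC_induce_image_iff ht).1 (hG _)
  by_cases hs : Sum.inl v ∈ s ∧ Sum.inr () ∈ s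
  · have p_injOn : Set.InjOn p (s \ {Sum.inr ()}) := by
      rintro (a | _) ha (b | _) hb hab <;> simp_all [p]
    rw [← Set.insert_sdiff_self_of_mem hs.2]
    exact insert_twin (of_injOn p_injOn) (v := Sum.inl v) ⟨hs.1, by simp⟩ fun _ _ => Iff.rfl
  · refine of_injOn ?_
    rintro (a | _) ha (b | _) hb hab <;> simp_all [p]

theorem induce_glueGraphs {S : Type} {G : SimpleGraph V} {H : SimpleGraph W} {f : S → V}
    {h : S → W} (hG : ∀ s : Set V, InC s (G.induce s)) (hH : ∀ s : Set W, InC s (H.induce s))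
    (hf : Function.Injective f) (hh : Function.Injective h) [Finite S] (hS : Nat.card S ≤ 2)
    (hGS : ∀ s s', ¬ G.Adj (f s) (f s')) (hHS : ∀ s s', ¬ H.Adj (h s) (h s'))
    (s : Set (V ⊕ {w : W // w ∉ Set.range h})) : InC s ((glueGraphs G H f h).induce s) := by
  have hA : InC (s ∩ Set.range Sum.inl : Set _) ((glueGraphs G H f h).induce _) := by
    rw [← Set.image_preimage_eq_inter_range, inC_induce_image_iff Sum.inl_injective.injOn,
      glueGraphs_comap_inl]
    exact hG _
  have hB : InC (s ∩ Set.range (glueInr f h) : Set _) ((glueGraphs G H f h).induce _) := by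
    rw [← Set.image_preimage_eq_inter_range,
      inC_induce_image_iff (glueInr_injective hf hh).injOn, glueGraphs_comap_glueInr hf hh hGS hHS]
    exact hH _
  have hinter : s ∩ Set.range Sum.inl ∩ (s ∩ Set.range (glueInr f h)) ⊆
      Set.range (Sum.inl ∘ f) :=
    fun x hx => range_inl_inter_range_glueInr_subset hh ⟨hx.1.2, hx.2.2⟩
  have hs : s ∩ Set.range Sum.inl ∪ s ∩ Set.range (glueInr f h) = s := by
    rw [← Set.inter_union_distrib_left, range_inl_union_range_glueInr, Set.inter_univ]
  rw [← hs]
  refine union hA hB ?_ ?_ ?_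
  · refine (Set.ncard_le_ncard hinter).trans (le_of_eq_of_le ?_ hS)
    exact Set.ncard_range_of_injective (Sum.inl_injective.comp hf)
  · refine Set.Pairwise.mono hinter ?_
    rintro _ ⟨t, rfl⟩ _ ⟨t', rfl⟩ -
    exact fun hadj => hGS t t' (glueGraphs_adj_inl_inl.1 hadj)
  · rintro x ⟨hx, hxB⟩ y ⟨hy, hyA⟩
    exact glueGraphs_not_adj hh (fun h => hxB ⟨hx.1, h⟩) (fun h => hyA ⟨hy.1, h⟩)

theorem induce {G : SimpleGraph V} (hG : InC V G) (s : Set V) : InC s (G.induce s) := by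
  induction hG with
  | small V G hV hcard =>
    exact small _ _ inferInstance
      ((Nat.card_le_card_of_injective _ Subtype.val_injective).trans hcard)
  | iso V W G H _ e ih =>
    obtain ⟨e⟩ := e
    have comap_eq : G.comap e.symm = H := e.symm.toEmbedding.comap_eq
    rw [← comap_eq, ← inC_induce_image_iff e.symm.injective.injOn]
    exact ih _
  | replicate V G v _ ih => exact induce_replicateGraph v ih s
  | glue V W S G H f h _ _ hf hh _ hS hGS hHS ihG ihH =>
    exact induce_glueGraphs ihG ihH hf hh hS hGS hHS s

theorem cliqueFree_three {G : SimpleGraph V} (hG : InC V G) : G.CliqueFree 3 := by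
  induction hG with
  | small V G _ hcard =>
    have := Fintype.ofFinite V
    exact cliqueFree_of_card_lt (by rw [← Nat.card_eq_fintype_card]; lia)
  | iso V W G H _ e ih => exact cliqueFree_of_hom e.some.symm.toHom ih
  | replicate V G v _ ih =>
    rw [replicateGraph_eq_comap]
    exact cliqueFree_of_hom (Hom.comap _ _) ih
  | glue V W S G H f h _ _ hf hh _ _ hGS hHS ihG ihH =>
    have hA : (glueGraphs G H f h).CliqueFreeOn (Set.range Sum.inl) 3 :=
      cliqueFreeOn_range (by rwa [glueGraphs_comap_inl])
    have hB : (glueGraphs G H f h).CliqueFreeOn (Set.range (glueInr f h)) 3 :=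
      cliqueFreeOn_range (by rwa [glueGraphs_comap_glueInr hf hh hGS hHS])
    rw [← cliqueFreeOn_univ, ← range_inl_union_range_glueInr (f := f)]
    exact cliqueFreeOn_union hA hB fun x hx y hy => glueGraphs_not_adj hh hx.2 hy.2

end InC

end InC

namespace STree

section Realization

variable (t : STree)

theorem onBranch_root (b : t.Branch) : onBranch t b (root t) := by
  cases t <;> trivial

theorem not_treeAdj_root_left (u : t.NodeType) : ¬ treeAdj t (root t) u := by
  cases t <;> exact id

theorem not_treeAdj_root_right (u : t.NodeType) : ¬ treeAdj t u (root t) := by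
  cases t with
  | leaf => exact id
  | node => rcases u with u | u <;> exact id

variable {t}

theorem realization_adj_inl_inl {u v : t.NodeType} :
    t.realization.Adj (Sum.inl u) (Sum.inl v) ↔ u ≠ v ∧ (treeAdj t u v ∨ treeAdj t v u) := by
  simp [realization]

theorem realization_adj_inl_inr {u : t.NodeType} {b : t.Branch} :
    t.realization.Adj (Sum.inl u) (Sum.inr b) ↔ onBranch t b u := by
  simp [realization]

theorem realization_not_adj_inr_inr {b b' : t.Branch} :
    ¬ t.realization.Adj (Sum.inr b) (Sum.inr b') := by
  simp [realization]

theorem realization_adj_root {x : t.NodeType ⊕ t.Branch} :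
    t.realization.Adj (Sum.inl t.root) x ↔ x.isRight := by
  rcases x with u | b
  · simp [realization_adj_inl_inl, not_treeAdj_root_left, not_treeAdj_root_right]
  · simp [realization_adj_inl_inr, onBranch_root]

end Realization

section Node

variable {ι : Type} (c : ι → STree) (g : SimpleGraph ι)

/-- A node of the `i`-th subtree, as a node of the whole tree. -/
def subtreeNode (i : ι) (u : (c i).NodeType) : (node ι c g).NodeType :=
  Sum.inr ⟨i, u⟩

/-- A branch of the `i`-th subtree, prolonged to the root of the whole tree. -/
def subtreeBranch (i : ι) (b : (c i).Branch) : (node ι c g).Branch :=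
  ⟨i, b⟩

/-- The vertex of the realization of `node ι c g` that corresponds to the vertex `x` of the
realization of the `i`-th subtree. -/
def subtreeVertex (i : ι) :
    (c i).NodeType ⊕ (c i).Branch → (node ι c g).NodeType ⊕ (node ι c g).Branch :=
  Sum.map (subtreeNode c g i) (subtreeBranch c g i)

/-- The vertex of the realization of `node ι c g` given by the `i`-th child of the root. -/
def childVertex (i : ι) : (node ι c g).NodeType ⊕ (node ι c g).Branch :=
  subtreeVertex c g i (Sum.inl (c i).root)

variable {c g} {i j : ι}

theorem subtreeNode_injective : Function.Injective (subtreeNode c g i) :=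
  Sum.inr_injective.comp sigma_mk_injective

theorem subtreeBranch_injective : Function.Injective (subtreeBranch c g i) :=
  sigma_mk_injective (β := fun i => (c i).Branch)

theorem subtreeNode_ne_subtreeNode (hij : i ≠ j) (u : (c i).NodeType) (v : (c j).NodeType) :
    subtreeNode c g i u ≠ subtreeNode c g j v :=
  fun h => hij (congrArg Sigma.fst (Sum.inr_injective h))

theorem subtreeVertex_injective : Function.Injective (subtreeVertex c g i) :=
  Sum.map_injective.2 ⟨subtreeNode_injective, subtreeBranch_injective⟩

theorem eq_of_subtreeVertex_eq {x : (c i).NodeType ⊕ (c i).Branch}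
    {y : (c j).NodeType ⊕ (c j).Branch} (h : subtreeVertex c g i x = subtreeVertex c g j y) :
    i = j := by
  rcases x with u | b <;> rcases y with v | b' <;> cases h <;> rfl

theorem childVertex_injective : Function.Injective (childVertex c g) :=
  fun _ _ => eq_of_subtreeVertex_eq

theorem eq_root_or_mem_range_subtreeVertex (x : (node ι c g).NodeType ⊕ (node ι c g).Branch) :
    x = Sum.inl (node ι c g).root ∨ ∃ i, x ∈ Set.range (subtreeVertex c g i) := by
  rcases x with (_ | ⟨i, u⟩) | ⟨i, b⟩
  · exact Or.inl rfl
  · exact Or.inr ⟨i, Sum.inl u, rfl⟩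
  · exact Or.inr ⟨i, Sum.inr b, rfl⟩

theorem treeAdj_node_same {u v : (c i).NodeType} :
    (node ι c g).treeAdj (subtreeNode c g i u) (subtreeNode c g i v) ↔ (c i).treeAdj u v := by
  simp [treeAdj, subtreeNode]

theorem treeAdj_node_of_ne (hij : i ≠ j) {u : (c i).NodeType} {v : (c j).NodeType} :
    (node ι c g).treeAdj (subtreeNode c g i u) (subtreeNode c g j v) ↔
      g.Adj i j ∧ u = (c i).root ∧ v = (c j).root := by
  simp [treeAdj, subtreeNode, hij]

theorem onBranch_node_same {u : (c i).NodeType} {b : (c i).Branch} :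
    (node ι c g).onBranch (subtreeBranch c g i b) (subtreeNode c g i u) ↔ (c i).onBranch b u := by
  simp [onBranch, subtreeNode, subtreeBranch]

theorem not_onBranch_node_of_ne (hij : i ≠ j) {u : (c i).NodeType} {b : (c j).Branch} :
    ¬ (node ι c g).onBranch (subtreeBranch c g j b) (subtreeNode c g i u) := by
  simp [onBranch, subtreeNode, subtreeBranch, hij]

theorem comap_subtreeVertex :
    (node ι c g).realization.comap (subtreeVertex c g i) = (c i).realization := by
  ext (u | b) (v | b')
  · refine realization_adj_inl_inl.trans (Iff.trans ?_ realization_adj_inl_inl.symm)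
    rw [treeAdj_node_same, treeAdj_node_same, subtreeNode_injective.ne_iff]
  · exact realization_adj_inl_inr.trans (onBranch_node_same.trans realization_adj_inl_inr.symm)
  · rw [adj_comm, adj_comm _ (Sum.inr b)]
    exact realization_adj_inl_inr.trans (onBranch_node_same.trans realization_adj_inl_inr.symm)
  · exact iff_of_false realization_not_adj_inr_inr realization_not_adj_inr_inr

variable (c g i) in
/-- The realization of the `i`-th subtree inside the realization of the whole tree. -/
def subtreeHom : (c i).realization →g (node ι c g).realization where
  toFun := subtreeVertex c g i
  map_rel' h := by rwa [← comap_subtreeVertex (g := g)] at h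

theorem subtreeVertex_adj_subtreeVertex_of_ne (hij : i ≠ j)
    {x : (c i).NodeType ⊕ (c i).Branch} {y : (c j).NodeType ⊕ (c j).Branch} :
    (node ι c g).realization.Adj (subtreeVertex c g i x) (subtreeVertex c g j y) ↔
      g.Adj i j ∧ x = Sum.inl (c i).root ∧ y = Sum.inl (c j).root := by
  rcases x with u | b <;> rcases y with v | b'
  · refine realization_adj_inl_inl.trans ?_
    rw [treeAdj_node_of_ne hij, treeAdj_node_of_ne hij.symm, g.adj_comm j, and_comm (a := v = _),
      or_self, and_iff_right (subtreeNode_ne_subtreeNode hij u v), Sum.inl_injective.eq_iff,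
      Sum.inl_injective.eq_iff]
  · refine realization_adj_inl_inr.trans (iff_of_false (not_onBranch_node_of_ne hij) ?_)
    simp
  · refine (adj_comm _ _ _).trans <| realization_adj_inl_inr.trans <|
      iff_of_false (not_onBranch_node_of_ne hij.symm) ?_
    simp
  · refine iff_of_false realization_not_adj_inr_inr ?_
    simp

theorem comap_childVertex : (node ι c g).realization.comap (childVertex c g) = g := by
  ext i j
  by_cases hij : i = j
  · subst hij
    simp
  · simp [childVertex, subtreeVertex_adj_subtreeVertex_of_ne hij]

theorem root_adj_subtreeVertex {x : (c i).NodeType ⊕ (c i).Branch} :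
    (node ι c g).realization.Adj (Sum.inl (node ι c g).root) (subtreeVertex c g i x) ↔
      x.isRight :=
  realization_adj_root.trans (by simp [subtreeVertex])

theorem root_not_adj_childVertex :
    ¬ (node ι c g).realization.Adj (Sum.inl (node ι c g).root) (childVertex c g i) := by
  simp [childVertex, root_adj_subtreeVertex]

theorem childVertex_adj_subtreeVertex {x : (c i).NodeType ⊕ (c i).Branch} :
    (node ι c g).realization.Adj (childVertex c g i) (subtreeVertex c g i x) ↔ x.isRight := by
  rw [childVertex, ← comap_adj (f := subtreeVertex c g i), comap_subtreeVertex,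
    realization_adj_root]

end Node

section Membership

variable {ι : Type} {c : ι → STree} {g : SimpleGraph ι} {i : ι}

variable (c g) in
/-- The root of `node ι c g` and its children, as vertices of the realization. -/
def topVertices : Set ((node ι c g).NodeType ⊕ (node ι c g).Branch) :=
  insert (Sum.inl (node ι c g).root) (Set.range (childVertex c g))

variable (c g) in
/-- The vertices of the realization of the `i`-th subtree together with the root of
`node ι c g`, which is a twin of the `i`-th child there. -/
def rootedSubtree (i : ι) : Set ((node ι c g).NodeType ⊕ (node ι c g).Branch) :=
  insert (Sum.inl (node ι c g).root) (Set.range (subtreeVertex c g i))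

theorem inC_induce_topVertices (hg : InC ι g) :
    InC (topVertices c g) ((node ι c g).realization.induce (topVertices c g)) := by
  refine InC.insert_isolated ?_ ?_
  · rwa [inC_induce_range_iff childVertex_injective, comap_childVertex]
  · rintro _ ⟨i, rfl⟩
    exact root_not_adj_childVertex

theorem inC_induce_rootedSubtree (hc : InC _ (c i).realization) :
    InC (rootedSubtree c g i) ((node ι c g).realization.induce (rootedSubtree c g i)) := by
  refine InC.insert_twin (v := childVertex c g i) ?_ ⟨_, rfl⟩ ?_
  · rwa [inC_induce_range_iff subtreeVertex_injective, comap_subtreeVertex]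
  · rintro _ ⟨x, rfl⟩
    exact root_adj_subtreeVertex.trans childVertex_adj_subtreeVertex.symm

theorem topVertices_inter_rootedSubtree_subset :
    topVertices c g ∩ rootedSubtree c g i ⊆ {Sum.inl (node ι c g).root, childVertex c g i} := by
  rintro x ⟨rfl | ⟨j, rfl⟩, hx | ⟨y, hy⟩⟩
  · exact Or.inl rfl
  · exact Or.inl rfl
  · exact Or.inl hx
  · rw [eq_of_subtreeVertex_eq hy]
    exact Or.inr rfl

theorem isIndepSet_root_childVertex :
    (node ι c g).realization.IsIndepSet {Sum.inl (node ι c g).root, childVertex c g i} :=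
  Set.pairwise_pair.2 fun _ =>
    ⟨root_not_adj_childVertex, fun h => root_not_adj_childVertex h.symm⟩

theorem rootedSubtree_inter_subset_topVertices :
    Pairwise fun i j => rootedSubtree c g i ∩ rootedSubtree c g j ⊆ topVertices c g := by
  rintro i j hij x ⟨hx | ⟨y, rfl⟩, hx' | ⟨y', hy'⟩⟩
  · exact Or.inl hx
  · exact Or.inl hx
  · exact Or.inl hx'
  · exact absurd (eq_of_subtreeVertex_eq hy').symm hij

theorem not_adj_of_notMem_rootedSubtree {x y : (node ι c g).NodeType ⊕ (node ι c g).Branch}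
    (hx : x ∉ rootedSubtree c g i) (hy : y ∈ rootedSubtree c g i \ topVertices c g) :
    ¬ (node ι c g).realization.Adj x y := by
  obtain ⟨rfl | ⟨y, rfl⟩, hytop⟩ := hy
  · exact absurd (Or.inl rfl) hytop
  obtain rfl | ⟨j, x, rfl⟩ := eq_root_or_mem_range_subtreeVertex x
  · exact absurd (Or.inl rfl) hx
  have hji : j ≠ i := by
    rintro rfl
    exact hx (Or.inr ⟨x, rfl⟩)
  rw [subtreeVertex_adj_subtreeVertex_of_ne hji]
  rintro ⟨-, -, rfl⟩
  exact hytop (Or.inr ⟨i, rfl⟩)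

theorem inC_realization_node (hg : InC ι g) (hc : ∀ i, InC _ (c i).realization) :
    InC _ (node ι c g).realization := by
  have := hg.finite
  have := Fintype.ofFinite ι
  have hcover : topVertices c g ∪ ⋃ i ∈ Finset.univ, rootedSubtree c g i = Set.univ := by
    refine Set.eq_univ_of_forall fun x => ?_
    obtain hx | ⟨i, hx⟩ := eq_root_or_mem_range_subtreeVertex x
    · exact Or.inl (Or.inl hx)
    · exact Or.inr (Set.mem_biUnion (Finset.mem_coe.2 (Finset.mem_univ i)) (Or.inr hx))
  rw [← inC_induce_univ_iff, ← hcover]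
  refine InC.union_biUnion (inC_induce_topVertices hg)
    (fun i => inC_induce_rootedSubtree (hc i)) (fun i => ?_) (fun i => ?_)
    rootedSubtree_inter_subset_topVertices
    (fun i y hy x hx => not_adj_of_notMem_rootedSubtree hx hy) _
  · exact (Set.ncard_le_ncard topVertices_inter_rootedSubtree_subset).trans
      ((Set.ncard_insert_le _ _).trans (by simp))
  · exact isIndepSet_root_childVertex.mono topVertices_inter_rootedSubtree_subset

theorem inC_realization_leaf : InC _ leaf.realization := by
  let e : leaf.NodeType ⊕ leaf.Branch ≃ Bool := Equiv.boolEquivPUnitSumPUnit.symm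
  refine .small _ _ (Finite.of_equiv _ e.symm) ?_
  rw [Nat.card_congr e, Nat.card_eq_fintype_card, Fintype.card_bool]

theorem inC_realization {t : STree} (ht : ∀ p, t.IsInternalGraphOf p → InC p.1 p.2) :
    InC _ t.realization := by
  induction t with
  | leaf => exact inC_realization_leaf
  | node ι c g ih =>
    exact inC_realization_node (ht _ (.here ι c g)) fun i =>
      ih i fun p hp => ht p (.child ι c g i p hp)

end Membership

end STree

theorem STree.IsInternalGraphOf.mem_of_buildTree {L : List (Σ V : Type, SimpleGraph V)}
    {p : Σ V : Type, SimpleGraph V} (hp : (buildTree L).IsInternalGraphOf p) : p ∈ L := by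
  induction L with
  | nil => cases hp
  | cons q L ih =>
    cases hp with
    | here => exact List.mem_cons_self
    | child _ _ _ _ _ hp => exact List.mem_cons_of_mem _ (ih hp)

theorem twincutList_eq_map (m : ℕ) :
    twincutList m = (List.range m).map fun j => twincutG (j + 2) := by
  induction m with
  | zero => rfl
  | succ m ih =>
    rw [List.range_succ, List.map_append, ← ih]
    rfl

theorem length_twincutList (m : ℕ) : (twincutList m).length = m := by
  rw [twincutList_eq_map, List.length_map, List.length_range]

theorem getElem_twincutList {m j : ℕ} (hj : j < (twincutList m).length) :
    (twincutList m)[j] = twincutG (j + 2) := by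
  simp [twincutList_eq_map]

theorem inC_twincutG (k : ℕ) : InC (twincutG k).1 (twincutG k).2 := by
  induction k using Nat.strong_induction_on with
  | h k ih =>
    match k with
    | 0 | 1 => exact .small PUnit ⊥ inferInstance (by simp)
    | m + 2 =>
      refine STree.inC_realization fun p hp => ?_
      have hmem := hp.mem_of_buildTree
      rw [twincutList_eq_map, List.mem_map] at hmem
      obtain ⟨j, hj, rfl⟩ := hmem
      exact ih _ (by simpa using hj)

namespace STree

section Chromatic

variable {α : Type*}

theorem exists_childVertex_color_notMem {ι : Type} {c : ι → STree} {g : SimpleGraph ι}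
    (C : (node ι c g).realization.Coloring α) {A : Finset α} (hg : ¬ g.Colorable A.card) :
    ∃ i, C (childVertex c g i) ∉ A := by
  by_contra! hA
  rw [← comap_childVertex (c := c) (g := g)] at hg
  let colorInA : ((node ι c g).realization.comap (childVertex c g)).Coloring A :=
    Coloring.mk (fun i => ⟨C (childVertex c g i), hA i⟩) fun hij =>
      Subtype.coe_ne_coe.1 (C.valid hij)
  exact hg (Fintype.card_coe A ▸ colorInA.colorable)

/-- The colors of the nodes on the branch `b`, that is, of the neighbors of the branch vertex. -/
def branchColors {t : STree} (C : t.realization.Coloring α) (b : t.Branch) : Set α :=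
  C '' t.realization.neighborSet (Sum.inr b)

theorem color_root_mem_branchColors {t : STree} (C : t.realization.Coloring α) (b : t.Branch) :
    C (Sum.inl t.root) ∈ branchColors C b :=
  ⟨_, (realization_adj_inl_inr.2 (onBranch_root t b)).symm, rfl⟩

theorem color_branch_notMem_branchColors {t : STree} (C : t.realization.Coloring α)
    (b : t.Branch) : C (Sum.inr b) ∉ branchColors C b :=
  fun ⟨_, hx, heq⟩ => C.valid hx heq.symm

theorem branchColors_comp_subtreeHom_subset {ι : Type} {c : ι → STree} {g : SimpleGraph ι} {i : ι}
    (C : (node ι c g).realization.Coloring α) (b : (c i).Branch) :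
    branchColors (C.comp (subtreeHom c g i)) b ⊆ branchColors C (subtreeBranch c g i b) := by
  rintro _ ⟨x, hx, rfl⟩
  exact ⟨subtreeVertex c g i x, (subtreeHom c g i).map_adj hx, rfl⟩

theorem exists_branch_le_encard_branchColors_node {ι : Type} {c : ι → STree} {g : SimpleGraph ι}
    (C : (node ι c g).realization.Coloring α) (A : Finset α) {n : ℕ} (hg : ¬ g.Colorable A.card)
    (hc : ∀ (i : ι) (C' : (c i).realization.Coloring α) (A' : Finset α), A'.card = A.card + 1 →
      ∃ b, n ≤ (A' ∪ branchColors C' b : Set α).encard) :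
    ∃ b, n ≤ (A ∪ branchColors C b : Set α).encard := by
  classical
  obtain ⟨i, hi⟩ := exists_childVertex_color_notMem C hg
  let C' := C.comp (subtreeHom c g i)
  obtain ⟨b, hb⟩ := hc i C' (insert (C (childVertex c g i)) A) (Finset.card_insert_of_notMem hi)
  have colors_subset := branchColors_comp_subtreeHom_subset C b
  refine ⟨subtreeBranch c g i b, hb.trans (Set.encard_le_encard (Set.union_subset ?_ ?_))⟩
  · rw [Finset.coe_insert]
    exact Set.insert_subset (Or.inr (colors_subset (color_root_mem_branchColors C' b)))
      Set.subset_union_left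
  · exact colors_subset.trans Set.subset_union_right

theorem exists_branch_le_encard_branchColors {L : List (Σ V : Type, SimpleGraph V)}
    (C : (buildTree L).realization.Coloring α) (A : Finset α)
    (hL : ∀ (j : ℕ) (hj : j < L.length), ¬ (L[j]).2.Colorable (A.card + j)) :
    ∃ b, (A.card + L.length : ℕ) ≤ (A ∪ branchColors C b : Set α).encard := by
  induction L generalizing A with
  | nil =>
    exact ⟨PUnit.unit, (Set.encard_coe_eq_coe_finsetCard A).ge.trans
      (Set.encard_le_encard Set.subset_union_left)⟩
  | cons p L ih =>
    refine exists_branch_le_encard_branchColors_node C A (hL 0 (Nat.succ_pos _))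
      fun _ C' A' hA' => ?_
    have card_add : A.card + (p :: L).length = A'.card + L.length := by
      rw [hA', List.length_cons, add_right_comm, add_assoc]
    rw [card_add]
    refine ih C' A' fun j hj => ?_
    rw [hA', add_right_comm, add_assoc]
    exact hL (j + 1) (Nat.succ_lt_succ hj)

theorem not_colorable_realization_buildTree {L : List (Σ V : Type, SimpleGraph V)}
    (hL : ∀ (j : ℕ) (hj : j < L.length), ¬ (L[j]).2.Colorable (j + 1)) :
    ¬ (buildTree L).realization.Colorable (L.length + 1) := by
  rintro ⟨C⟩
  obtain ⟨b, hb⟩ := exists_branch_le_encard_branchColors C {C (Sum.inl (buildTree L).root)}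
    fun j hj => by rw [Finset.card_singleton, add_comm]; exact hL j hj
  rw [Finset.coe_singleton, Set.singleton_union,
    Set.insert_eq_of_mem (color_root_mem_branchColors C b), Finset.card_singleton, add_comm] at hb
  have colors_ssubset : branchColors C b ⊂ Set.univ :=
    Set.ssubset_univ_iff.2 fun h =>
      color_branch_notMem_branchColors C b (h.symm ▸ Set.mem_univ _)
  have encard_lt := (Set.toFinite _).encard_lt_encard colors_ssubset
  rw [Set.encard_univ, ENat.card_eq_coe_fintype_card, Fintype.card_fin] at encard_lt
  exact hb.not_gt encard_lt

end Chromatic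

end STree

theorem not_colorable_twincutG (k : ℕ) : ¬ (twincutG (k + 1)).2.Colorable k := by
  induction k using Nat.strong_induction_on with
  | h k ih =>
    match k with
    | 0 => exact fun ⟨C⟩ => (C PUnit.unit).elim0
    | m + 1 =>
      have hL (j : ℕ) (hj : j < (twincutList m).length) :
          ¬ ((twincutList m)[j]).2.Colorable (j + 1) := by
        rw [getElem_twincutList]
        exact ih (j + 1) (Nat.succ_lt_succ (hj.trans_eq (length_twincutList m)))
      have hcol := STree.not_colorable_realization_buildTree hL
      rwa [length_twincutList] at hcol

/-- every twincut graph `G_k` belongs to `𝒞`; consequently `𝒞`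
is a hereditary class of triangle-free graphs of unbounded chromatic number. -/
theorem twincut_mem_C :
    (∀ k : ℕ, 1 ≤ k → InC (twincutG k).1 (twincutG k).2) ∧
    (∀ (V : Type) (G : SimpleGraph V), InC V G → ∀ s : Set V, InC s (G.induce s)) ∧
    (∀ (V : Type) (G : SimpleGraph V), InC V G → G.CliqueFree 3) ∧
    (∀ n : ℕ, ∃ (V : Type) (G : SimpleGraph V), InC V G ∧ (n : ℕ∞) < G.chromaticNumber) := by
  refine ⟨fun k _ => inC_twincutG k, fun _ _ hG => hG.induce, fun _ _ hG => hG.cliqueFree_three,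
    fun n => ⟨_, _, inC_twincutG (n + 1), ?_⟩⟩
  rw [← not_le, chromaticNumber_le_iff_colorable]
  exact not_colorable_twincutG n
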